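/- Let S be a finite nonempty type, P : S → S → ℝ a stochastic matrix (0 ≤ P s s' for all s, s' and ∑_{s'} P s s' = 1 for every s), and B ⊆ S a set of unsafe states. Define r : ℕ → S → ℝ by r 0 s = 1 if s ∈ B and 0 otherwise, and r (h+1) s = 1 if s ∈ B and r (h+1) s = ∑_{s'} P s s' · r h s' otherwise. Then for every h ∈ ℕ and s ∈ S, r h s = ∑_{π : Fin (h+1) → S, π 0 = s, ∃ i, π i ∈ B} ∏_{i : Fin h} P (π i.castSucc) (π i.succ); that is, the backward-recursion value r h s equals the probability, over length-h trajectories of the Markov chain started in s, of visiting an unsafe state within horizon h. -/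

import Mathlib

open Finset

/-! Split a path after its first step. Its weight factors as the first transition probability times
the weight of the remaining path, so sums over paths satisfy a one-step recursion. Started outside
`B`, a path meets `B` iff its tail does, which turns that recursion into the one for `r`. Started
in `B`, every path counts, and the row sums being `1` make the total weight `1`. -/

section PathSum

variable {R S : Type*} [CommSemiring R]

/-- The weight of a path `π 0, …, π n` under the kernel `P`: the product of `P` along its steps.
For a stochastic `P` this is the probability of the trajectory `π` given its initial state.
A path with `n` steps is encoded by its `n + 1` states. -/
def pathWeight (P : S → S → R) {n : ℕ} (π : Fin (n + 1) → S) : R :=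
  ∏ i : Fin n, P (π i.castSucc) (π i.succ)

theorem pathWeight_cons (P : S → S → R) {n : ℕ} (s : S) (τ : Fin (n + 1) → S) :
    pathWeight P (Fin.cons s τ : Fin (n + 2) → S) = P s (τ 0) * pathWeight P τ := by
  simp only [pathWeight, Fin.prod_univ_succ (n := n), Fin.castSucc_zero, Fin.cons_zero,
    Fin.cons_succ, ← Fin.succ_castSucc]

variable [Fintype S] [DecidableEq S]

theorem sum_filter_apply_zero_eq {M : Type*} [AddCommMonoid M] {n : ℕ} (s : S)
    (f : (Fin (n + 1) → S) → M) :
    ∑ π with π 0 = s, f π = ∑ τ : Fin n → S, f (Fin.cons s τ) := by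
  have cons_tail : ∀ π : Fin (n + 1) → S, π 0 = s → Fin.cons s (Fin.tail π) = π := by
    rintro π rfl
    exact Fin.cons_self_tail π
  refine sum_nbij' Fin.tail (Fin.cons (α := fun _ => S) s) ?_ ?_ ?_ ?_ ?_ <;>
    simp +contextual [cons_tail]

/-- The sum of `f` over all `n`-step paths started in `s`, weighted by `pathWeight P`.
For a stochastic `P` this is the expectation of `f` over trajectories of the Markov chain. -/
def pathSum (P : S → S → R) {n : ℕ} (s : S) (f : (Fin (n + 1) → S) → R) : R :=
  ∑ π with π 0 = s, pathWeight P π * f π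

theorem pathSum_congr (P : S → S → R) {n : ℕ} {s : S} {f g : (Fin (n + 1) → S) → R}
    (hfg : ∀ π, π 0 = s → f π = g π) : pathSum P s f = pathSum P s g :=
  sum_congr rfl fun π hπ => by rw [hfg π (mem_filter_univ π |>.mp hπ)]

theorem pathSum_zero (P : S → S → R) (s : S) (f : (Fin 1 → S) → R) :
    pathSum P s f = f fun _ => s := by
  have cons_default : (Fin.cons s default : Fin 1 → S) = fun _ => s :=
    funext (Fin.forall_fin_one.mpr rfl)
  simp [pathSum, pathWeight, sum_filter_apply_zero_eq, cons_default]

theorem pathSum_succ (P : S → S → R) {n : ℕ} (s : S) (f : (Fin (n + 2) → S) → R) :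
    pathSum P s f = ∑ s', P s s' * pathSum P s' fun τ : Fin (n + 1) → S => f (Fin.cons s τ) := by
  calc pathSum P s f
      = ∑ τ : Fin (n + 1) → S, P s (τ 0) * (pathWeight P τ * f (Fin.cons s τ)) := by
        simp only [pathSum, sum_filter_apply_zero_eq, pathWeight_cons, mul_assoc]
    _ = ∑ s', ∑ τ : Fin (n + 1) → S with τ 0 = s',
          P s (τ 0) * (pathWeight P τ * f (Fin.cons s τ)) :=
        (sum_fiberwise _ _ _).symm
    _ = ∑ s', P s s' * pathSum P s' fun τ : Fin (n + 1) → S => f (Fin.cons s τ) := by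
        refine sum_congr rfl fun s' _ => ?_
        rw [pathSum, mul_sum]
        exact sum_congr rfl fun τ hτ => by rw [mem_filter_univ τ |>.mp hτ]

theorem pathSum_one {P : S → S → R} (hstoch : ∀ s, ∑ s', P s s' = 1) (n : ℕ) (s : S) :
    pathSum P s (fun _ : Fin (n + 1) → S => 1) = 1 := by
  induction n generalizing s with
  | zero => rw [pathSum_zero]
  | succ n ih => simp only [pathSum_succ, ih, mul_one, hstoch]

end PathSum

section HorizonRisk

variable {R S : Type*} [CommSemiring R] [Fintype S] [DecidableEq S]

/-- The horizon-`h` risk of the state `s`: the total weight of the `h`-step paths from `s` that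
visit `B`, the initial state included. It is a `pathSum` of the indicator of visiting `B`, so that
one-step recursion applies to it. -/
def horizonRisk (P : S → S → R) (B : Set S) [DecidablePred (· ∈ B)] (h : ℕ) (s : S) : R :=
  pathSum P s fun π : Fin (h + 1) → S => if ∃ i, π i ∈ B then 1 else 0

variable (P : S → S → R) {B : Set S} [DecidablePred (· ∈ B)]

theorem horizonRisk_eq_sum_ite (h : ℕ) (s : S) :
    horizonRisk P B h s = ∑ π : Fin (h + 1) → S,
      if π 0 = s ∧ ∃ i, π i ∈ B then ∏ i : Fin h, P (π i.castSucc) (π i.succ) else 0 := by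
  simp only [horizonRisk, pathSum, pathWeight, sum_filter, mul_ite, mul_one, mul_zero, ite_and]

theorem horizonRisk_zero (s : S) : horizonRisk P B 0 s = if s ∈ B then 1 else 0 := by
  simp only [horizonRisk, pathSum_zero, exists_const]

theorem horizonRisk_of_mem {P : S → S → R} (hstoch : ∀ s, ∑ s', P s s' = 1) (h : ℕ) {s : S}
    (hs : s ∈ B) : horizonRisk P B h s = 1 := by
  rw [← pathSum_one hstoch h s]
  exact pathSum_congr P fun π hπ => if_pos ⟨0, hπ ▸ hs⟩

theorem horizonRisk_succ_of_notMem (h : ℕ) {s : S} (hs : s ∉ B) :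
    horizonRisk P B (h + 1) s = ∑ s', P s s' * horizonRisk P B h s' := by
  simp only [horizonRisk, pathSum_succ, Fin.exists_fin_succ (n := h + 1), Fin.cons_zero,
    Fin.cons_succ, hs, false_or]

theorem backward_recursion_eq_path_sum_general {P : S → S → R} (hstoch : ∀ s, ∑ s', P s s' = 1)
    {r : ℕ → S → R} (hr0 : ∀ s, r 0 s = if s ∈ B then 1 else 0)
    (hrsucc : ∀ h s, r (h + 1) s = if s ∈ B then 1 else ∑ s', P s s' * r h s')
    (h : ℕ) (s : S) :
    r h s = ∑ π : Fin (h + 1) → S,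
      if π 0 = s ∧ ∃ i, π i ∈ B then ∏ i : Fin h, P (π i.castSucc) (π i.succ) else 0 := by
  rw [← horizonRisk_eq_sum_ite]
  induction h generalizing s with
  | zero => rw [hr0, horizonRisk_zero]
  | succ h ih =>
    rw [hrsucc]
    split_ifs with hs
    · rw [horizonRisk_of_mem hstoch (h + 1) hs]
    · simp only [ih, horizonRisk_succ_of_notMem P h hs]

end HorizonRisk

/-- The backward-recursion value `r h s` equals the probability, over length-`h`
trajectories of the Markov chain started in `s`, of visiting an unsafe state
within horizon `h`. -/
theorem backward_recursion_eq_path_sum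
    {S : Type*} [Fintype S] [Nonempty S] [DecidableEq S]
    (P : S → S → ℝ) (hP : ∀ s s', 0 ≤ P s s') (hstoch : ∀ s, ∑ s', P s s' = 1)
    (B : Set S) [DecidablePred (· ∈ B)]
    (r : ℕ → S → ℝ)
    (hr0 : ∀ s, r 0 s = if s ∈ B then 1 else 0)
    (hrsucc : ∀ h s, r (h + 1) s =
      if s ∈ B then 1 else ∑ s', P s s' * r h s')
    (h : ℕ) (s : S) :
    r h s = ∑ π : Fin (h + 1) → S,
      if π 0 = s ∧ ∃ i, π i ∈ B then
        ∏ i : Fin h, P (π i.castSucc) (π i.succ)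
      else 0 :=
  backward_recursion_eq_path_sum_general hstoch hr0 hrsucc h s
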